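/- There exists a universal constant C > 0 with the following property. Let D be an integer with D > (576 log 2)³ + 3 and σ, R > 0 with R² > σ²(D−1). Set s⋆ = √(R² − σ²(D−3)) and ν² = σ⁴(D−3)/(2s⋆²), and suppose 576 log(2) · σ² D^{2/3} ≤ s⋆² ≤ 3σ²D. Then for all s with 0 ≤ s ≤ s⋆ + (1/12) σ (D−3)^{1/6}, one has [φ ∗ (−h')](s) / [φ ∗ h](s) ≤ C · max{ 1/ν, (s − s⋆)/ν² }. -/

import Mathlib

/-!
Write `s⋆ = S`, `n = D - 3`, `a = n / 2` and `m = max ν (s - S)`, so that the bound to be proved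
is a multiple of `m / ν ^ 2`. The argument reduces the convolved ratio to the hazard rate `-h' / h`.

Convolution (`weighted_integral_le`). Split `φ ∗ (-h')` at `w = s + ν`. Below `w`, a hazard bound
`-h' ≤ K h` contributes at most `K (φ ∗ h)(s)`. Above `w`, the Gaussian weight is at most `φ(ν)`
and `-h'` integrates to at most `h(w)`, for a total of `φ(ν) h(w)`. Since `h` is decreasing on
`[0, ∞)`, the window `(s, w]` alone gives `(φ ∗ h)(s) ≥ ν φ(ν) h(w)`. So the ratio is at most
`K + 1 / ν`, and `1 / ν ≤ m / ν ^ 2`.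

Hazard rate (`gamma_reverse_hazard`, `hazard_bound`). With `x = (R² - u²) / (2σ²)`, the hazard rate
at `u` is `(u / σ²) g(x) / ∫₀ˣ g` for `g(t) = t ^ a * exp (-t)`, whose mode `a` corresponds to
`u = S`. If `x ≥ a - y` with `0 ≤ y ≤ a / 4`, then `g ≥ g(x) / e` holds on a
window of length `a / (4 (y + √a))` to the left of `x`, so `g(x) / ∫₀ˣ g ≤ 4e (y + √a) / a`. For
`u ≤ s + ν` one may take `y ≤ 3 S m / σ²`, and `√a = ν S / σ²`; this gives `K = 32e m / ν ^ 2`.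
The hypotheses on `S` and `s` ensure `u ≤ 2S` and `y ≤ a / 4`.
-/

open MeasureTheory

/-- `h(s) = (1/Γ((D-1)/2)) ∫₀^{max{0,(R²-s²)/(2σ²)}} t^((D-3)/2) e^(-t) dt`, the
probability that a chi-square random variable with `D-1` degrees of freedom is at
most `(R² - s²)/σ²`. -/
noncomputable def hFun (D : ℕ) (σ R : ℝ) (s : ℝ) : ℝ :=
  (1 / Real.Gamma (((D : ℝ) - 1) / 2)) *
    ∫ t in (0 : ℝ)..(max 0 ((R ^ 2 - s ^ 2) / (2 * σ ^ 2))),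
      t ^ (((D : ℝ) - 3) / 2) * Real.exp (-t)

/-- The negative derivative `-h'(s)` of `h`, extended by `0` outside `(0, R)`. -/
noncomputable def negDH0 (D : ℕ) (σ R : ℝ) (s : ℝ) : ℝ :=
  if 0 < s ∧ s < R then
    (1 / Real.Gamma (((D : ℝ) - 1) / 2)) * (s / σ ^ 2) *
      ((R ^ 2 - s ^ 2) / (2 * σ ^ 2)) ^ (((D : ℝ) - 3) / 2) *
      Real.exp (-((R ^ 2 - s ^ 2) / (2 * σ ^ 2)))
  else 0

/-- The centered Gaussian density with standard deviation `σ`. -/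
noncomputable def gaussPdf (σ : ℝ) (v : ℝ) : ℝ :=
  (1 / (Real.sqrt (2 * Real.pi) * σ)) * Real.exp (-v ^ 2 / (2 * σ ^ 2))

/-- Convolution `[φ ∗ f](t) = ∫ φ(v) f(t - v) dv` with the Gaussian density. -/
noncomputable def gaussConv (σ : ℝ) (f : ℝ → ℝ) (t : ℝ) : ℝ :=
  ∫ v : ℝ, gaussPdf σ v * f (t - v)

/-- Two-piece comparison of weighted integrals: on `(-∞, w]` use the pointwise bound `f ≤ K h`;
beyond `w` the weight is at most `p w`, so `f` contributes at most `p w * h w`, while the window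
`(s, w]` alone gives the integral of `p * h` at least `(w - s) * (p w * h w)`. -/
lemma weighted_integral_le {p f h : ℝ → ℝ} {s w K : ℝ} (hsw : s < w) (hK : 0 ≤ K)
    (hpf : Integrable fun u => p u * f u) (hph : Integrable fun u => p u * h u)
    (hf : Integrable f) (hp0 : ∀ u, 0 ≤ p u) (hf0 : ∀ u, 0 ≤ f u) (hh0 : ∀ u, 0 ≤ h u)
    (hfh : ∀ u, u ≤ w → f u ≤ K * h u)
    (hpw : ∀ u, w < u → p u ≤ p w) (hpw' : ∀ u, s < u → u ≤ w → p w ≤ p u)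
    (hhw : ∀ u, s < u → u ≤ w → h w ≤ h u)
    (htail : ∫ u in Set.Ioi w, f u ≤ h w) :
    ∫ u, p u * f u ≤ (K + 1 / (w - s)) * ∫ u, p u * h u := by
  have hB : ∀ t : Set ℝ, ∫ u in t, p u * h u ≤ ∫ u, p u * h u := fun t =>
    setIntegral_le_integral hph (Filter.Eventually.of_forall fun u => mul_nonneg (hp0 u) (hh0 u))
  have hsplit : ∫ u, p u * f u =
      (∫ u in Set.Iic w, p u * f u) + ∫ u in Set.Ioi w, p u * f u := by
    rw [← Set.compl_Iic, integral_add_compl measurableSet_Iic hpf]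
  have h1 : ∫ u in Set.Iic w, p u * f u ≤ K * ∫ u, p u * h u := by
    calc ∫ u in Set.Iic w, p u * f u ≤ ∫ u in Set.Iic w, K * (p u * h u) := by
          refine setIntegral_mono_on hpf.integrableOn (hph.const_mul K).integrableOn
            measurableSet_Iic fun u hu => ?_
          have := mul_le_mul_of_nonneg_left (hfh u hu) (hp0 u)
          linarith
      _ = K * ∫ u in Set.Iic w, p u * h u := integral_const_mul _ _
      _ ≤ _ := mul_le_mul_of_nonneg_left (hB _) hK
  have h2 : ∫ u in Set.Ioi w, p u * f u ≤ p w * h w := by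
    calc ∫ u in Set.Ioi w, p u * f u ≤ ∫ u in Set.Ioi w, p w * f u := by
          refine setIntegral_mono_on hpf.integrableOn (hf.const_mul _).integrableOn
            measurableSet_Ioi fun u hu => ?_
          exact mul_le_mul_of_nonneg_right (hpw u hu) (hf0 u)
      _ = p w * ∫ u in Set.Ioi w, f u := integral_const_mul _ _
      _ ≤ _ := mul_le_mul_of_nonneg_left htail (hp0 w)
  have h3 : (w - s) * (p w * h w) ≤ ∫ u, p u * h u := by
    calc (w - s) * (p w * h w) = ∫ u in Set.Ioc s w, p w * h w := by
          simp [hsw.le]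
      _ ≤ ∫ u in Set.Ioc s w, p u * h u := by
          refine setIntegral_mono_on (integrableOn_const (by simp)) hph.integrableOn
            measurableSet_Ioc fun u hu => ?_
          exact mul_le_mul (hpw' u hu.1 hu.2) (hhw u hu.1 hu.2) (hh0 w) (hp0 u)
      _ ≤ _ := hB _
  have h4 : p w * h w ≤ 1 / (w - s) * ∫ u, p u * h u := by
    rw [one_div_mul_eq_div, le_div_iff₀ (sub_pos.2 hsw)]
    linarith
  rw [hsplit, add_mul]
  linarith

lemma continuous_gammaIntegrand {a : ℝ} (ha : 0 ≤ a) :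
    Continuous fun t : ℝ => t ^ a * Real.exp (-t) :=
  (Real.continuous_rpow_const ha).mul (by fun_prop)

/-- Reverse hazard bound for the Gamma density `t ^ a * exp (-t)` at a point `x` at most `y` below
the mode `a`. On the window of length `δ = a / (4 (y + √a))` to the left of `x` the density
decreases by a factor of at most `e`. -/
lemma gamma_reverse_hazard {a x y : ℝ} (ha : 1 ≤ a) (hy : 0 ≤ y) (hya : y ≤ a / 4)
    (hx : a - y ≤ x) :
    x ^ a * Real.exp (-x) ≤ 4 * Real.exp 1 * (y + √a) / a *
      ∫ t in (0 : ℝ)..x, t ^ a * Real.exp (-t) := by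
  have hr1 : 1 ≤ √a := Real.one_le_sqrt.2 ha
  have hr2 : √a * √a = a := Real.mul_self_sqrt (by linarith)
  obtain ⟨δ, hδ⟩ : ∃ δ, δ = a / (4 * (y + √a)) := ⟨_, rfl⟩
  have hS : 0 < 4 * (y + √a) := by positivity
  have hδ0 : 0 < δ := by rw [hδ]; positivity
  have hδe : δ * (4 * (y + √a)) = a := by rw [hδ]; field_simp
  have hδ1 : δ ≤ √a / 4 := by
    have : 0 ≤ δ * y := by positivity
    nlinarith
  have hδa : δ ≤ a / 4 := by nlinarith
  have hδy : δ * (y + δ) ≤ a / 2 := by nlinarith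
  have hx0 : 0 < x - δ := by linarith
  have hcont := continuous_gammaIntegrand (a := a) (by linarith)
  have hpt : ∀ t ∈ Set.Icc (x - δ) x,
      Real.exp (-1) * (x ^ a * Real.exp (-x)) ≤ t ^ a * Real.exp (-t) := by
    intro t ht
    have ht0 : 0 < t := lt_of_lt_of_le hx0 ht.1
    have hxp : 0 < x := by linarith
    have hta : a / 2 ≤ t := by linarith [ht.1]
    rw [Real.rpow_def_of_pos hxp, Real.rpow_def_of_pos ht0, ← Real.exp_add, ← Real.exp_add,
      ← Real.exp_add, Real.exp_le_exp]
    have hlog : Real.log x - Real.log t ≤ (x - t) / t := by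
      rw [← Real.log_div hxp.ne' ht0.ne']
      have := Real.log_le_sub_one_of_pos (div_pos hxp ht0)
      rw [sub_div, div_self ht0.ne']
      exact this
    have hk : (x - t) * (a - t) ≤ t := by
      rcases le_total a t with h | h
      · nlinarith [ht.2]
      · calc (x - t) * (a - t) ≤ δ * (y + δ) := by
              apply mul_le_mul <;> linarith [ht.1, ht.2]
          _ ≤ t := by linarith
    have hk2 : a * ((x - t) / t) ≤ 1 + (x - t) := by
      rw [← mul_div_assoc, div_le_iff₀ ht0]
      nlinarith
    nlinarith [mul_le_mul_of_nonneg_left hlog (by linarith : 0 ≤ a)]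
  have hlow : δ * (Real.exp (-1) * (x ^ a * Real.exp (-x))) ≤
      ∫ t in (0 : ℝ)..x, t ^ a * Real.exp (-t) := by
    calc δ * (Real.exp (-1) * (x ^ a * Real.exp (-x)))
        = ∫ t in (x - δ)..x, Real.exp (-1) * (x ^ a * Real.exp (-x)) := by
          rw [intervalIntegral.integral_const, smul_eq_mul]; ring
      _ ≤ ∫ t in (x - δ)..x, t ^ a * Real.exp (-t) :=
          intervalIntegral.integral_mono_on (by linarith) (by simp)
            (hcont.intervalIntegrable _ _) hpt
      _ ≤ _ := by
          rw [← intervalIntegral.integral_add_adjacent_intervals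
            (hcont.intervalIntegrable 0 (x - δ)) (hcont.intervalIntegrable (x - δ) x)]
          have : 0 ≤ ∫ t in (0 : ℝ)..(x - δ), t ^ a * Real.exp (-t) :=
            intervalIntegral.integral_nonneg hx0.le fun t ht =>
              mul_nonneg (Real.rpow_nonneg ht.1 _) (Real.exp_pos _).le
          linarith
  have hmul := mul_le_mul_of_nonneg_left hlow
    (by positivity : 0 ≤ 4 * Real.exp 1 * (y + √a) / a)
  refine le_trans (le_of_eq ?_) hmul
  have he : Real.exp 1 * Real.exp (-1) = 1 := by rw [← Real.exp_add]; simp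
  have hd : 4 * (y + √a) / a * δ = 1 := by
    rw [hδ]
    field_simp
  calc x ^ a * Real.exp (-x) = (4 * (y + √a) / a * δ) * (Real.exp 1 * Real.exp (-1)) *
        (x ^ a * Real.exp (-x)) := by rw [he, hd]; ring
    _ = _ := by ring

section Basic

variable {D : ℕ} {σ R : ℝ}

lemma hFun_continuous (hD : 3 ≤ (D : ℝ)) : Continuous (hFun D σ R) := by
  have hcont := continuous_gammaIntegrand (a := ((D : ℝ) - 3) / 2) (by linarith)
  have hP : Continuous fun x : ℝ => ∫ t in (0 : ℝ)..x,
      t ^ (((D : ℝ) - 3) / 2) * Real.exp (-t) :=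
    intervalIntegral.continuous_primitive (fun a b => hcont.intervalIntegrable a b) 0
  unfold hFun
  exact continuous_const.mul (hP.comp (by fun_prop))

lemma gamma_const_nonneg (hD : 3 ≤ (D : ℝ)) : 0 ≤ 1 / Real.Gamma (((D : ℝ) - 1) / 2) :=
  one_div_nonneg.2 (Real.Gamma_pos_of_pos (by linarith)).le

lemma hFun_nonneg (hD : 3 ≤ (D : ℝ)) (u : ℝ) : 0 ≤ hFun D σ R u := by
  refine mul_nonneg (gamma_const_nonneg hD) ?_
  exact intervalIntegral.integral_nonneg (le_max_left _ _) fun t ht =>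
    mul_nonneg (Real.rpow_nonneg ht.1 _) (Real.exp_pos _).le

lemma hFun_anti (hD : 3 ≤ (D : ℝ)) {u v : ℝ} (hu : 0 ≤ u) (huv : u ≤ v) :
    hFun D σ R v ≤ hFun D σ R u := by
  refine mul_le_mul_of_nonneg_left ?_ (gamma_const_nonneg hD)
  have hcont := continuous_gammaIntegrand (a := ((D : ℝ) - 3) / 2) (by linarith)
  refine intervalIntegral.integral_mono_interval le_rfl (le_max_left _ _) ?_ ?_
    (hcont.intervalIntegrable _ _)
  · gcongr
  · filter_upwards [ae_restrict_mem measurableSet_Ioc] with t ht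
    exact mul_nonneg (Real.rpow_nonneg ht.1.le _) (Real.exp_pos _).le

lemma hFun_eq_zero (hR : 0 < R) {u : ℝ} (hu : R ≤ |u|) : hFun D σ R u = 0 := by
  have h : R ^ 2 ≤ u ^ 2 := by
    rw [← sq_abs u]; gcongr
  have : max 0 ((R ^ 2 - u ^ 2) / (2 * σ ^ 2)) = 0 :=
    max_eq_left (div_nonpos_of_nonpos_of_nonneg (by linarith) (by positivity))
  simp [hFun, this]

lemma negDH0_nonneg (hD : 3 ≤ (D : ℝ)) (u : ℝ) : 0 ≤ negDH0 D σ R u := by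
  unfold negDH0
  split_ifs with h
  · have h2 : 0 ≤ (R ^ 2 - u ^ 2) / (2 * σ ^ 2) :=
      div_nonneg (by nlinarith [h.1, h.2]) (by positivity)
    have := gamma_const_nonneg hD
    have := h.1
    have := Real.rpow_nonneg h2 (((D : ℝ) - 3) / 2)
    positivity
  · exact le_rfl

/-- The formula for `-h'` on `(0, R)`, as a function continuous on the whole line. -/
noncomputable def negDHCont (D : ℕ) (σ R : ℝ) (s : ℝ) : ℝ :=
  (1 / Real.Gamma (((D : ℝ) - 1) / 2)) * (s / σ ^ 2) *
      ((R ^ 2 - s ^ 2) / (2 * σ ^ 2)) ^ (((D : ℝ) - 3) / 2) *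
      Real.exp (-((R ^ 2 - s ^ 2) / (2 * σ ^ 2)))

lemma negDHCont_continuous (hD : 3 ≤ (D : ℝ)) : Continuous (negDHCont D σ R) := by
  have h := (Real.continuous_rpow_const (q := ((D : ℝ) - 3) / 2) (by linarith)).comp
    (by fun_prop : Continuous fun s : ℝ => (R ^ 2 - s ^ 2) / (2 * σ ^ 2))
  unfold negDHCont
  exact ((by fun_prop : Continuous fun s : ℝ =>
    (1 / Real.Gamma (((D : ℝ) - 1) / 2)) * (s / σ ^ 2)).mul h).mul (by fun_prop)

lemma negDH0_eq_indicator : negDH0 D σ R = (Set.Ioo 0 R).indicator (negDHCont D σ R) := by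
  funext u
  simp only [negDH0, negDHCont, Set.indicator, Set.mem_Ioo]

lemma integrable_mul_negDH0 (hD : 3 ≤ (D : ℝ)) {p : ℝ → ℝ} (hp : Continuous p) :
    Integrable fun u => p u * negDH0 D σ R u := by
  have h : (fun u => p u * negDH0 D σ R u) =
      (Set.Ioo 0 R).indicator (fun u => p u * negDHCont D σ R u) := by
    funext u
    rw [negDH0_eq_indicator]
    by_cases hu : u ∈ Set.Ioo 0 R <;> simp [hu]
  rw [h, integrable_indicator_iff measurableSet_Ioo]
  exact ((hp.mul (negDHCont_continuous hD)).integrableOn_Icc (a := 0) (b := R)).mono_set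
    Set.Ioo_subset_Icc_self

lemma integrable_mul_hFun (hD : 3 ≤ (D : ℝ)) (hR : 0 < R) {p : ℝ → ℝ} (hp : Continuous p) :
    Integrable fun u => p u * hFun D σ R u := by
  refine (hp.mul (hFun_continuous hD)).integrable_of_hasCompactSupport ?_
  refine HasCompactSupport.intro (isCompact_Icc (a := -R) (b := R)) fun u hu => ?_
  have : R ≤ |u| := by
    by_contra hlt
    exact hu ((abs_le.1 (not_le.1 hlt).le))
  simp [hFun_eq_zero hR this]

lemma integral_negDH0_Ioi (hD : 3 ≤ (D : ℝ)) (hσ : 0 < σ) (hR : 0 < R) {w : ℝ} (hw : 0 ≤ w) :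
    ∫ u in Set.Ioi w, negDH0 D σ R u ≤ hFun D σ R w := by
  rcases le_or_gt R w with hRw | hwR
  · rw [setIntegral_eq_zero_of_forall_eq_zero]
    · exact hFun_nonneg hD w
    · intro u hu
      have hu' : w < u := hu
      exact if_neg fun h => by linarith [h.2]
  have hcont := continuous_gammaIntegrand (a := ((D : ℝ) - 3) / 2) (by linarith)
  have hder : ∀ u : ℝ, HasDerivAt (fun u => -((1 / Real.Gamma (((D : ℝ) - 1) / 2)) *
      ∫ t in (0 : ℝ)..((R ^ 2 - u ^ 2) / (2 * σ ^ 2)),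
        t ^ (((D : ℝ) - 3) / 2) * Real.exp (-t))) (negDHCont D σ R u) u := by
    intro u
    have h1 := intervalIntegral.integral_hasDerivAt_right
      (hcont.intervalIntegrable 0 ((R ^ 2 - u ^ 2) / (2 * σ ^ 2)))
      hcont.stronglyMeasurable.stronglyMeasurableAtFilter hcont.continuousAt
    have h2 : HasDerivAt (fun u : ℝ => (R ^ 2 - u ^ 2) / (2 * σ ^ 2)) (-(u / σ ^ 2)) u := by
      have := (((hasDerivAt_id u).pow 2).const_sub (R ^ 2)).div_const (2 * σ ^ 2)
      refine this.congr_deriv ?_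
      simp
      field_simp
    have h3 := ((HasDerivAt.comp u h1 h2).const_mul
      (1 / Real.Gamma (((D : ℝ) - 1) / 2))).neg
    refine h3.congr_deriv ?_
    unfold negDHCont
    ring
  have hFTC := intervalIntegral.integral_eq_sub_of_hasDerivAt (a := w) (b := R)
    (fun u _ => hder u) ((negDHCont_continuous hD).intervalIntegrable _ _)
  have hset : ∫ u in Set.Ioi w, negDH0 D σ R u = ∫ u in w..R, negDHCont D σ R u := by
    rw [negDH0_eq_indicator, setIntegral_indicator measurableSet_Ioo,
      intervalIntegral.integral_of_le hwR.le, integral_Ioc_eq_integral_Ioo]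
    congr 2
    ext u
    simp only [Set.mem_inter_iff, Set.mem_Ioi, Set.mem_Ioo]
    constructor
    · exact fun h => ⟨h.1, h.2.2⟩
    · exact fun h => ⟨h.1, by linarith [h.1], h.2⟩
  rw [hset, hFTC]
  have hmax : max 0 ((R ^ 2 - w ^ 2) / (2 * σ ^ 2)) = (R ^ 2 - w ^ 2) / (2 * σ ^ 2) :=
    max_eq_right (div_nonneg (by nlinarith) (by positivity))
  simp [hFun, hmax]

lemma gaussConv_eq (f : ℝ → ℝ) (s : ℝ) :
    gaussConv σ f s = ∫ u, gaussPdf σ (s - u) * f u := by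
  unfold gaussConv
  rw [← integral_sub_left_eq_self (fun u => gaussPdf σ (s - u) * f u) volume s]
  simp

lemma gaussPdf_continuous : Continuous (gaussPdf σ) := by
  unfold gaussPdf; fun_prop

lemma gaussPdf_le (hσ : 0 < σ) {u v : ℝ} (h : v ^ 2 ≤ u ^ 2) : gaussPdf σ u ≤ gaussPdf σ v := by
  unfold gaussPdf
  gcongr

end Basic

/-- Hazard rate bound for `h` at `u`, where `S` is `s⋆` and `m` dominates both `ν` and
`(u - S) / 2`. The last two hypotheses keep `u` within the range where the Gamma variable
`(R² - u²) / (2σ²)` is at least three quarters of its mode. -/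
lemma hazard_bound {D : ℕ} {σ R S ν m u : ℝ} (hD : 5 ≤ (D : ℝ)) (hσ : 0 < σ) (hS : 0 < S)
    (hS2 : S ^ 2 = R ^ 2 - σ ^ 2 * ((D : ℝ) - 3))
    (hν0 : 0 < ν) (hν : ν ^ 2 = σ ^ 4 * ((D : ℝ) - 3) / (2 * S ^ 2))
    (hνm : ν ≤ m) (hu0 : 0 < u) (hum : u ≤ S + 2 * m) (huS : u ≤ 2 * S)
    (hua : u ≤ S ∨ 3 / 2 * S * (u - S) / σ ^ 2 ≤ ((D : ℝ) - 3) / 8) :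
    negDH0 D σ R u ≤ 32 * Real.exp 1 * (m / ν ^ 2) * hFun D σ R u := by
  obtain ⟨a, ha⟩ : ∃ a, a = ((D : ℝ) - 3) / 2 := ⟨_, rfl⟩
  have ha1 : 1 ≤ a := by linarith
  have hDa : (D : ℝ) - 3 = 2 * a := by linarith
  rw [hDa] at hS2 hν hua
  have hm : 0 < m := by linarith
  have hσ2 : 0 < σ ^ 2 := by positivity
  -- `√a = ν S / σ²` converts the Gamma scale into the scale of `s`.
  have hsqrt : √a = ν * S / σ ^ 2 := by
    rw [Real.sqrt_eq_iff_mul_self_eq_of_pos (by positivity)]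
    have : ν ^ 2 * S ^ 2 = σ ^ 4 * a := by rw [hν]; field_simp
    field_simp
    linarith
  have key : ∃ y, 0 ≤ y ∧ y ≤ a / 4 ∧ a - y ≤ (R ^ 2 - u ^ 2) / (2 * σ ^ 2) ∧
      y ≤ 3 * S * m / σ ^ 2 := by
    rcases le_total u S with h | h
    · refine ⟨0, le_rfl, by linarith, ?_, by positivity⟩
      rw [le_div_iff₀ (by positivity)]
      nlinarith
    · have hua' : 3 / 2 * S * (u - S) / σ ^ 2 ≤ a / 4 := by
        rcases hua with h' | h'
        · have : u - S = 0 := by linarith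
          rw [this]; simp; linarith
        · linarith
      refine ⟨3 / 2 * S * (u - S) / σ ^ 2, ?_, hua', ?_, ?_⟩
      · have : 0 ≤ u - S := by linarith
        positivity
      · rw [le_div_iff₀ (by positivity), sub_mul]
        have : 3 / 2 * S * (u - S) / σ ^ 2 * (2 * σ ^ 2) = 3 * S * (u - S) := by
          field_simp
        rw [this]
        nlinarith [mul_nonneg (sub_nonneg.2 h) (sub_nonneg.2 huS)]
      · gcongr ?_ / _
        nlinarith
  obtain ⟨y, hy0, hya, hxy, hym⟩ := key
  have hg := gamma_reverse_hazard ha1 hy0 hya hxy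
  have hx0 : 0 ≤ (R ^ 2 - u ^ 2) / (2 * σ ^ 2) := by linarith
  have hG := gamma_const_nonneg (D := D) (by linarith)
  have hI : 0 ≤ ∫ t in (0 : ℝ)..((R ^ 2 - u ^ 2) / (2 * σ ^ 2)), t ^ a * Real.exp (-t) :=
    intervalIntegral.integral_nonneg hx0 fun t ht =>
      mul_nonneg (Real.rpow_nonneg ht.1 _) (Real.exp_pos _).le
  have hcoef : u / σ ^ 2 * (4 * Real.exp 1 * (y + √a) / a) ≤ 32 * Real.exp 1 * (m / ν ^ 2) := by
    have h1 : y + √a ≤ 4 * S * m / σ ^ 2 := by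
      have : ν * S / σ ^ 2 ≤ S * m / σ ^ 2 := by
        gcongr ?_ / _
        nlinarith
      have h4 : 4 * S * m / σ ^ 2 = 3 * S * m / σ ^ 2 + S * m / σ ^ 2 := by ring
      rw [hsqrt, h4]
      linarith
    calc u / σ ^ 2 * (4 * Real.exp 1 * (y + √a) / a)
        ≤ 2 * S / σ ^ 2 * (4 * Real.exp 1 * (4 * S * m / σ ^ 2) / a) := by gcongr
      _ = 32 * Real.exp 1 * (m / ν ^ 2) := by
        rw [hν]; field_simp; ring
  have hneg : negDH0 D σ R u ≤ (1 / Real.Gamma (((D : ℝ) - 1) / 2)) * (u / σ ^ 2 *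
      (((R ^ 2 - u ^ 2) / (2 * σ ^ 2)) ^ a * Real.exp (-((R ^ 2 - u ^ 2) / (2 * σ ^ 2))))) := by
    unfold negDH0
    rw [← ha]
    split_ifs
    · exact le_of_eq (by ring)
    · have := Real.rpow_nonneg hx0 a
      positivity
  refine hneg.trans ?_
  unfold hFun
  rw [max_eq_right hx0, ← ha]
  calc (1 / Real.Gamma (((D : ℝ) - 1) / 2)) * (u / σ ^ 2 *
      (((R ^ 2 - u ^ 2) / (2 * σ ^ 2)) ^ a * Real.exp (-((R ^ 2 - u ^ 2) / (2 * σ ^ 2)))))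
      ≤ (1 / Real.Gamma (((D : ℝ) - 1) / 2)) * (u / σ ^ 2 * (4 * Real.exp 1 * (y + √a) / a *
        ∫ t in (0 : ℝ)..((R ^ 2 - u ^ 2) / (2 * σ ^ 2)), t ^ a * Real.exp (-t))) := by
        gcongr
    _ = (1 / Real.Gamma (((D : ℝ) - 1) / 2)) * ((u / σ ^ 2 * (4 * Real.exp 1 * (y + √a) / a)) *
        ∫ t in (0 : ℝ)..((R ^ 2 - u ^ 2) / (2 * σ ^ 2)), t ^ a * Real.exp (-t)) := by ring
    _ ≤ (1 / Real.Gamma (((D : ℝ) - 1) / 2)) * ((32 * Real.exp 1 * (m / ν ^ 2)) *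
        ∫ t in (0 : ℝ)..((R ^ 2 - u ^ 2) / (2 * σ ^ 2)), t ^ a * Real.exp (-t)) := by
        gcongr
    _ = _ := by ring

set_option maxHeartbeats 1000000 in
/-- **Relative bounds.** There is a universal constant `C > 0` such that for any
integer `D > (576 log 2)³ + 3`, `σ, R > 0` with `R² > σ²(D-1)`,
`s⋆ = √(R² - σ²(D-3))`, `ν² = σ⁴(D-3)/(2s⋆²)`, and
`576 log 2 · σ² D^(2/3) ≤ s⋆² ≤ 3σ²D`, for all `0 ≤ s ≤ s⋆ + (1/12)σ(D-3)^(1/6)`,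
`[φ ∗ (-h')](s) / [φ ∗ h](s) ≤ C max{1/ν, (s-s⋆)/ν²}`. -/
theorem gauss_conv_relative_bound :
    ∃ C : ℝ, 0 < C ∧
      ∀ (D : ℕ), (576 * Real.log 2) ^ 3 + 3 < (D : ℝ) →
      ∀ (σ R : ℝ), 0 < σ → 0 < R → σ ^ 2 * ((D : ℝ) - 1) < R ^ 2 →
      ∀ (sstar ν : ℝ),
        sstar = Real.sqrt (R ^ 2 - σ ^ 2 * ((D : ℝ) - 3)) →
        ν = Real.sqrt (σ ^ 4 * ((D : ℝ) - 3) / (2 * sstar ^ 2)) →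
        576 * Real.log 2 * σ ^ 2 * (D : ℝ) ^ ((2 : ℝ) / 3) ≤ sstar ^ 2 →
        sstar ^ 2 ≤ 3 * σ ^ 2 * D →
        ∀ s : ℝ, 0 ≤ s → s ≤ sstar + (1 / 12) * σ * ((D : ℝ) - 3) ^ ((1 : ℝ) / 6) →
          gaussConv σ (negDH0 D σ R) s / gaussConv σ (hFun D σ R) s ≤
            C * max (1 / ν) ((s - sstar) / ν ^ 2) := by
  refine ⟨100, by norm_num, ?_⟩
  intro D hD σ R hσ hR hRD S ν hS hν hlow hup s hs0 hs
  -- With `n = D - 3 = N ^ 6`, all size conditions become polynomial in `N`.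
  have hl2 := Real.log_two_gt_d9
  have hDbig : 1000 < (D : ℝ) := by
    have : (10 : ℝ) ^ 3 ≤ (576 * Real.log 2) ^ 3 := by gcongr; linarith
    linarith
  obtain ⟨N, hN⟩ : ∃ N, N = ((D : ℝ) - 3) ^ ((1 : ℝ) / 6) := ⟨_, rfl⟩
  have hn0 : 0 ≤ (D : ℝ) - 3 := by linarith
  have hN0 : 0 ≤ N := by rw [hN]; positivity
  have hN6 : N ^ 6 = (D : ℝ) - 3 := by
    rw [hN, ← Real.rpow_natCast, ← Real.rpow_mul hn0]; norm_num
  have hN3 : 3 ≤ N := by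
    by_contra h
    have : N ^ 6 ≤ 3 ^ 6 := by gcongr; linarith
    linarith
  have hN4 : N ^ 4 ≤ (D : ℝ) ^ ((2 : ℝ) / 3) := by
    have : N ^ 4 = ((D : ℝ) - 3) ^ ((2 : ℝ) / 3) := by
      rw [hN, ← Real.rpow_natCast, ← Real.rpow_mul hn0]; norm_num
    rw [this]
    gcongr
    linarith
  rw [← hN] at hs
  have hS2 : S ^ 2 = R ^ 2 - σ ^ 2 * ((D : ℝ) - 3) := by
    rw [hS, Real.sq_sqrt]
    nlinarith [sq_nonneg σ]
  have hSlow : 324 * σ ^ 2 * N ^ 4 ≤ S ^ 2 := by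
    refine le_trans ?_ hlow
    gcongr
    linarith
  have hS0 : 0 < S := by
    have h0 : 0 ≤ S := by rw [hS]; positivity
    have h1 : 0 < S ^ 2 := lt_of_lt_of_le (by positivity) hSlow
    exact lt_of_le_of_ne h0 fun h => by rw [← h] at h1; norm_num at h1
  have hSN : 18 * σ * N ^ 2 ≤ S :=
    abs_le_of_sq_le_sq' (by linarith [hSlow, show (18 * σ * N ^ 2) ^ 2 = 324 * σ ^ 2 * N ^ 4 by ring])
      hS0.le |>.2
  have hSup : S ≤ 2 * σ * N ^ 3 := by
    refine abs_le_of_sq_le_sq' ?_ (by positivity) |>.2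
    have : (2 * σ * N ^ 3) ^ 2 = σ ^ 2 * (4 * ((D : ℝ) - 3)) := by rw [← hN6]; ring
    rw [this]
    nlinarith [sq_nonneg σ]
  have hν2 : ν ^ 2 = σ ^ 4 * ((D : ℝ) - 3) / (2 * S ^ 2) := by
    rw [hν, Real.sq_sqrt (by positivity)]
  have hν0 : 0 < ν := by
    rw [hν]; apply Real.sqrt_pos.2
    have : 0 < (D : ℝ) - 3 := by linarith
    positivity
  have hνN : ν ≤ σ * N / 18 := by
    refine abs_le_of_sq_le_sq' ?_ (by positivity) |>.2
    rw [hν2, ← hN6, div_le_iff₀ (by positivity)]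
    calc σ ^ 4 * N ^ 6 ≤ (σ * N / 18) ^ 2 * (2 * (324 * σ ^ 2 * N ^ 4)) := by
          have : 0 ≤ σ ^ 4 * N ^ 6 := by positivity
          nlinarith
      _ ≤ _ := by gcongr
  obtain ⟨m, hm⟩ : ∃ m, m = max ν (s - S) := ⟨_, rfl⟩
  have hνm : ν ≤ m := hm ▸ le_max_left _ _
  have hsm : s - S ≤ m := hm ▸ le_max_right _ _
  have hRHS : max (1 / ν) ((s - S) / ν ^ 2) = m / ν ^ 2 := by
    rw [hm, ← max_div_div_right (by positivity)]
    congr 1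
    field_simp
  rw [hRHS, gaussConv_eq, gaussConv_eq]
  have hK0 : 0 ≤ m / ν ^ 2 := by
    have : 0 < m := by linarith
    positivity
  have hD3 : 3 ≤ (D : ℝ) := by linarith
  have hp : Continuous fun u => gaussPdf σ (s - u) := gaussPdf_continuous.comp (by fun_prop)
  have hp0 : ∀ u, 0 ≤ gaussPdf σ (s - u) := fun u => by unfold gaussPdf; positivity
  have hmain := weighted_integral_le (p := fun u => gaussPdf σ (s - u)) (f := negDH0 D σ R)
    (h := hFun D σ R) (s := s) (w := s + ν) (K := 32 * Real.exp 1 * (m / ν ^ 2))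
    (by linarith) (by positivity) (integrable_mul_negDH0 hD3 hp) (integrable_mul_hFun hD3 hR hp)
    (by simpa using integrable_mul_negDH0 (σ := σ) (R := R) hD3 (continuous_const (y := (1 : ℝ))))
    hp0 (negDH0_nonneg hD3) (hFun_nonneg hD3)
    (by
      intro u hu
      rcases le_or_gt u 0 with h0 | h0
      · rw [negDH0, if_neg fun h => by linarith [h.1]]
        have := hFun_nonneg (σ := σ) (R := R) hD3 u
        positivity
      have huS : u - S ≤ σ * N / 6 := by linarith
      refine hazard_bound (by linarith) hσ hS0 hS2 hν0 hν2 hνm h0 (by linarith) ?_ ?_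
      · have : σ * N ≤ σ * N ^ 2 := by
          gcongr
          exact le_self_pow₀ (by linarith) two_ne_zero
        linarith
      · refine Or.inr ?_
        rw [div_le_iff₀ (by positivity), ← hN6]
        calc 3 / 2 * S * (u - S) ≤ 3 / 2 * S * (σ * N / 6) := by gcongr
          _ ≤ 3 / 2 * (2 * σ * N ^ 3) * (σ * N / 6) := by gcongr
          _ = 1 / 2 * (σ ^ 2 * N ^ 4) := by ring
          _ ≤ 1 / 8 * N ^ 2 * (σ ^ 2 * N ^ 4) := by
            gcongr
            linarith [mul_le_mul hN3 hN3 (by norm_num) hN0, sq N]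
          _ = _ := by ring)
    (fun u hu => gaussPdf_le hσ (sq_le_sq.2 (by
      rw [abs_sub_comm s, abs_sub_comm s, abs_of_pos (by linarith), abs_of_pos (by linarith)]
      linarith)))
    (fun u hu hu' => gaussPdf_le hσ (sq_le_sq.2 (by
      rw [abs_sub_comm s, abs_sub_comm s, abs_of_pos (by linarith), abs_of_pos (by linarith)]
      linarith)))
    (fun u hu hu' => hFun_anti hD3 (by linarith) hu')
    (integral_negDH0_Ioi hD3 hσ hR (by linarith))
  have hB0 : 0 ≤ ∫ u, gaussPdf σ (s - u) * hFun D σ R u :=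
    integral_nonneg fun u => mul_nonneg (hp0 u) (hFun_nonneg hD3 u)
  refine div_le_of_le_mul₀ hB0 (by positivity) (hmain.trans ?_)
  gcongr
  have h1 : 1 / (s + ν - s) ≤ m / ν ^ 2 := by
    rw [add_sub_cancel_left, div_le_div_iff₀ hν0 (by positivity)]
    nlinarith
  have := mul_le_mul_of_nonneg_right Real.exp_one_lt_d9.le hK0
  linarith
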